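/- arXiv:2104.04400 — 3 statements merged into one kernel-verified Lean document; each statement's English description precedes it below -/
import Mathlib

section
/- Let x̄ ∈ ℝ^n satisfy ∑_i |x̄_i|^p = γ, and let I = {i : x̄_i ≠ 0}. Suppose x ∈ ℝ^n satisfies: (a) x_i = 0 for every i ∉ I; (b) sign(x̄_i)·x_i ≥ 0 for every i ∈ I; and (c) ∑_{i ∈ I} sign(x̄_i)·p·|x̄_i|^{p−1}·(x_i − x̄_i) ≤ 0. Then ∑_i |x_i|^p ≤ γ, i.e., x ∈ B. (In other words, the weighted-ℓ₁ linearized set B^k is contained in the ℓ_p ball B.) -/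
/-!
For `0 ≤ p ≤ 1` the function `t ↦ t ^ p` is concave on `[0, ∞)`, so it lies below each of its
tangent lines at positive points. The sign condition places `x i` and `xb i` in the same closed
half-line, on which `|·|` is linear, so the tangent inequality transfers to `t ↦ |t| ^ p` there;
off the support of `xb` the two points agree. Summing over the coordinates, the linearization of
`∑ i, |x i| ^ p` at `xb` bounds it from above.
-/

theorem rpow_le_rpow_add_tangent {p a b : ℝ} (hp0 : 0 ≤ p) (hp1 : p ≤ 1) (ha : 0 < a)
    (hb : 0 ≤ b) : b ^ p ≤ a ^ p + p * a ^ (p - 1) * (b - a) := by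
  have hratio : -1 ≤ b / a - 1 := by linarith [div_nonneg hb ha.le]
  have bernoulli : (b / a) ^ p ≤ 1 + p * (b / a - 1) := by
    simpa only [add_sub_cancel] using rpow_one_add_le_one_add_mul_self hratio hp0 hp1
  calc b ^ p = a ^ p * (b / a) ^ p := by
        rw [← Real.mul_rpow ha.le (div_nonneg hb ha.le), mul_div_cancel₀ b ha.ne']
    _ ≤ a ^ p * (1 + p * (b / a - 1)) := by gcongr
    _ = a ^ p + p * a ^ (p - 1) * (b - a) := by
        rw [Real.rpow_sub_one ha.ne']
        field_simp

theorem sign_mul_eq_abs {a b : ℝ} (ha : a ≠ 0) (hab : 0 ≤ Real.sign a * b) :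
    Real.sign a * b = |b| := by
  have habs_sign : |Real.sign a| = 1 := by
    rcases Real.sign_apply_eq_of_ne_zero a ha with h | h <;> simp [h]
  rw [← abs_of_nonneg hab, abs_mul, habs_sign, one_mul]

theorem abs_rpow_le_abs_rpow_add_tangent {p a b : ℝ} (hp0 : 0 ≤ p) (hp1 : p ≤ 1) (ha : a ≠ 0)
    (hab : 0 ≤ Real.sign a * b) :
    |b| ^ p ≤ |a| ^ p + Real.sign a * (p * |a| ^ (p - 1)) * (b - a) := by
  have hsub : |b| - |a| = Real.sign a * (b - a) := by
    rw [mul_sub, sign_mul_eq_abs ha hab, sign_mul_eq_abs ha (Real.sign_mul_nonneg a)]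
  calc |b| ^ p ≤ |a| ^ p + p * |a| ^ (p - 1) * (|b| - |a|) :=
        rpow_le_rpow_add_tangent hp0 hp1 (abs_pos.mpr ha) (abs_nonneg b)
    _ = |a| ^ p + Real.sign a * (p * |a| ^ (p - 1)) * (b - a) := by
        rw [hsub]
        ring

theorem sum_abs_rpow_le_sum_abs_rpow_add_tangent {ι : Type*} {s : Finset ι} {p : ℝ}
    {a b : ι → ℝ} (hp0 : 0 ≤ p) (hp1 : p ≤ 1) (hsupp : ∀ i ∈ s, a i = 0 → b i = 0)
    (hsign : ∀ i ∈ s, a i ≠ 0 → 0 ≤ Real.sign (a i) * b i) :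
    ∑ i ∈ s, |b i| ^ p ≤ ∑ i ∈ s, |a i| ^ p +
      ∑ i ∈ s with a i ≠ 0, Real.sign (a i) * (p * |a i| ^ (p - 1)) * (b i - a i) := by
  rw [Finset.sum_filter, ← Finset.sum_add_distrib]
  refine Finset.sum_le_sum fun i hi ↦ ?_
  by_cases hai : a i = 0
  · simp [hai, hsupp i hi hai]
  · simpa only [if_pos hai] using
      abs_rpow_le_abs_rpow_add_tangent hp0 hp1 hai (hsign i hi hai)

theorem stmt_8_general {ι : Type*} {s : Finset ι} {p γ : ℝ} {xb x : ι → ℝ} (hp0 : 0 ≤ p)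
    (hp1 : p ≤ 1) (hxb : ∑ i ∈ s, |xb i| ^ p ≤ γ) (hsupp : ∀ i ∈ s, xb i = 0 → x i = 0)
    (hsign : ∀ i ∈ s, xb i ≠ 0 → 0 ≤ Real.sign (xb i) * x i)
    (hlin : ∑ i ∈ s with xb i ≠ 0,
      Real.sign (xb i) * (p * |xb i| ^ (p - 1)) * (x i - xb i) ≤ 0) :
    ∑ i ∈ s, |x i| ^ p ≤ γ := by
  linarith [sum_abs_rpow_le_sum_abs_rpow_add_tangent hp0 hp1 hsupp hsign]

/-- the weighted-ℓ₁ linearized set `B^k` (formed at a boundary point `x̄` of the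
ℓ_p ball) is contained in the ℓ_p ball. -/
theorem stmt_8 (n : ℕ) (p γ : ℝ) (hp0 : 0 < p) (hp1 : p < 1) (hγ : 0 < γ)
    (xb x : EuclideanSpace ℝ (Fin n))
    (hxb : ∑ i, |xb i| ^ p = γ)
    (ha : ∀ i, xb i = 0 → x i = 0)
    (hb : ∀ i, xb i ≠ 0 → 0 ≤ Real.sign (xb i) * x i)
    (hc : ∑ i ∈ Finset.univ.filter (fun i => xb i ≠ 0),
        Real.sign (xb i) * (p * |xb i| ^ (p - 1)) * (x i - xb i) ≤ 0) :
    ∑ i, |x i| ^ p ≤ γ :=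
  stmt_8_general hp0.le hp1.le hxb.le (fun i _ ↦ ha i) (fun i _ ↦ hb i) hc
end

section
/- Let f : ℝ^n → ℝ be differentiable, let β > 0, and let x ∈ B satisfy ∑_i |x_i|^p = γ. Set u = x − β·∇f(x), I = {i : x_i ≠ 0}, and let B^x = {y ∈ ℝ^n : y_i = 0 for i ∉ I; sign(x_i)·y_i ≥ 0 for i ∈ I; ∑_{i ∈ I} sign(x_i)·p·|x_i|^{p−1}·(y_i − x_i) ≤ 0}. Then x is first-order stationary for minimizing f over B if and only if x is the minimizer over B^x of y ↦ (1/(2β))·‖y − u‖₂², i.e., ‖x − u‖₂² ≤ ‖y − u‖₂² for all y ∈ B^x. -/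
/-!
At a boundary point the second alternative of stationarity is the only one available, and it asks
for a multiplier `ξ ≥ 0` with `∇f(x) + ξ w = 0` on the support of `x`, where `w` is the gradient of
the constraint. By duality this holds iff `∇f(x)` is nonnegative on every direction `d` of the half
space `⟨w, d⟩ ≤ 0`. The sign constraints of `B^x` are inactive at `x`, so a short step along any
such `d` supported on the support of `x` stays in `B^x`. Hence the condition is the variational
inequality `⟨∇f(x), y - x⟩ ≥ 0` on the convex set `B^x`, which characterizes `x` as the
projection of `x - β ∇f(x)` onto it.
-/

open Filter Topology
open scoped InnerProductSpace

section Multiplier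

variable {𝕜 : Type*} [Field 𝕜] [LinearOrder 𝕜] [IsStrictOrderedRing 𝕜]

theorem exists_nonneg_add_smul_eq_zero_iff {V : Type*} [AddCommGroup V] [Module 𝕜 V]
    {a g : V →ₗ[𝕜] 𝕜} :
    (∃ ξ : 𝕜, 0 ≤ ξ ∧ g + ξ • a = 0) ↔ ∀ d, a d ≤ 0 → 0 ≤ g d := by
  constructor
  · rintro ⟨ξ, hξ, h⟩ d hd
    have hgd : g d + ξ * a d = 0 := LinearMap.congr_fun h d
    linarith [mul_nonpos_of_nonneg_of_nonpos hξ hd]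
  · intro h
    have g_eq_zero_of_mem_ker (d : V) (hd : a d = 0) : g d = 0 := by
      have hneg : 0 ≤ g (-d) := h (-d) (by simp [hd])
      rw [map_neg] at hneg
      linarith [h d hd.le]
    by_cases ha : a = 0
    · exact ⟨0, le_rfl, LinearMap.ext fun d ↦ by simp [g_eq_zero_of_mem_ker d (by simp [ha])]⟩
    · obtain ⟨v, hv⟩ : ∃ v, a v = 1 := LinearMap.surjective ha 1
      refine ⟨g (-v), h (-v) (by simp [hv]), LinearMap.ext fun d ↦ ?_⟩
      have hsplit : g (d - a d • v) = 0 := g_eq_zero_of_mem_ker _ (by simp [hv])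
      simp only [map_sub, map_smul, smul_eq_mul] at hsplit
      simp only [LinearMap.add_apply, LinearMap.smul_apply, map_neg, smul_eq_mul,
        LinearMap.zero_apply]
      linarith

theorem exists_nonneg_forall_mem_add_mul_eq_zero_iff {ι : Type*} {s : Finset ι} {a g : ι → 𝕜} :
    (∃ ξ : 𝕜, 0 ≤ ξ ∧ ∀ i ∈ s, g i + ξ * a i = 0) ↔
      ∀ d : ι → 𝕜, ∑ i ∈ s, a i * d i ≤ 0 → 0 ≤ ∑ i ∈ s, g i * d i := by
  classical
  let form (c : ι → 𝕜) : (ι → 𝕜) →ₗ[𝕜] 𝕜 := ∑ i ∈ s, c i • LinearMap.proj i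
  have form_apply (c d : ι → 𝕜) : form c d = ∑ i ∈ s, c i * d i := by simp [form]
  have form_eq_zero_iff (c : ι → 𝕜) : form c = 0 ↔ ∀ i ∈ s, c i = 0 := by
    refine ⟨fun h i hi ↦ ?_, fun h ↦ Finset.sum_eq_zero fun i hi ↦ by rw [h i hi, zero_smul]⟩
    simpa [form_apply, Pi.single_apply, hi] using LinearMap.congr_fun h (Pi.single i 1)
  have form_add_smul (ξ : 𝕜) : form g + ξ • form a = form (g + ξ • a) := by
    simp only [form, Finset.smul_sum, ← Finset.sum_add_distrib, Pi.add_apply, Pi.smul_apply,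
      add_smul, smul_assoc]
  simpa only [form_add_smul, form_eq_zero_iff, form_apply, Pi.add_apply, Pi.smul_apply,
    smul_eq_mul] using exists_nonneg_add_smul_eq_zero_iff (a := form a) (g := form g)

end Multiplier

section Projection

variable {E : Type*} [NormedAddCommGroup E] [InnerProductSpace ℝ E] {K : Set E} {x : E}

theorem isMinOn_norm_sub_iff_real_inner_nonpos (hK : Convex ℝ K) (hx : x ∈ K) {u : E} :
    IsMinOn (fun y ↦ ‖u - y‖) K x ↔ ∀ y ∈ K, ⟪u - x, y - x⟫_ℝ ≤ 0 := by
  rw [← norm_eq_iInf_iff_real_inner_le_zero hK hx]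
  refine ⟨fun h ↦ (h.iInf_eq hx).symm, fun h ↦ isMinOn_iff.2 fun y hy ↦ ?_⟩
  have hbdd : BddBelow (Set.range fun w : K ↦ ‖u - w‖) :=
    ⟨0, Set.forall_mem_range.2 fun _ ↦ norm_nonneg _⟩
  exact h.trans_le (ciInf_le hbdd ⟨y, hy⟩)

theorem isMinOn_sq_norm_sub_gradient_step_iff (hK : Convex ℝ K) (hx : x ∈ K) {β : ℝ} (hβ : 0 < β)
    {g : E} :
    IsMinOn (fun y ↦ 1 / (2 * β) * ‖y - (x - β • g)‖ ^ 2) K x ↔ ∀ y ∈ K, 0 ≤ ⟪g, y - x⟫_ℝ := by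
  have hstep : x - β • g - x = -(β • g) := by abel
  have hproj := isMinOn_norm_sub_iff_real_inner_nonpos hK hx (u := x - β • g)
  simp only [isMinOn_iff, hstep, inner_neg_left, real_inner_smul_left, neg_nonpos,
    mul_nonneg_iff_of_pos_left hβ] at hproj
  simp only [← hproj, isMinOn_iff, norm_sub_rev _ (x - β • g)]
  refine forall₂_congr fun y _ ↦ ?_
  rw [mul_le_mul_iff_right₀ (by positivity), pow_le_pow_iff_left₀ (norm_nonneg _) (norm_nonneg _)
    two_ne_zero, hstep]

end Projection

section OrthantHalfspace

variable {ι : Type*} [Fintype ι]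

/-- The half space with normal `w` whose boundary passes through `x`, cut down to the smallest face
of a closed orthant that contains `x`. When `w i` is the derivative of `|·| ^ p` at `x i`, this is
the set `B^x`, the linearization at `x` of an `ℓ_p` ball having `x` on its boundary. -/
def orthantHalfspace (w : ι → ℝ) (x : EuclideanSpace ℝ ι) : Set (EuclideanSpace ℝ ι) :=
  {y | (∀ i, x i = 0 → y i = 0) ∧ (∀ i, x i ≠ 0 → 0 ≤ Real.sign (x i) * y i) ∧
    ∑ i with x i ≠ 0, w i * (y i - x i) ≤ 0}

variable {w : ι → ℝ} {x : EuclideanSpace ℝ ι}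

theorem self_mem_orthantHalfspace : x ∈ orthantHalfspace w x :=
  ⟨fun _ hi ↦ hi, fun i _ ↦ Real.sign_mul_nonneg (x i), by simp⟩

theorem convex_orthantHalfspace : Convex ℝ (orthantHalfspace w x) := by
  rintro y ⟨hy_supp, hy_sign, hy_half⟩ z ⟨hz_supp, hz_sign, hz_half⟩ s t hs ht hst
  refine ⟨fun i hi ↦ by simp [hy_supp i hi, hz_supp i hi], fun i hi ↦ ?_, ?_⟩
  · have hcomb : Real.sign (x i) * (s • y + t • z) i =
        s * (Real.sign (x i) * y i) + t * (Real.sign (x i) * z i) := by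
      simp only [PiLp.add_apply, PiLp.smul_apply, smul_eq_mul]
      ring
    rw [hcomb]
    exact add_nonneg (mul_nonneg hs (hy_sign i hi)) (mul_nonneg ht (hz_sign i hi))
  · have hcomb : ∑ i with x i ≠ 0, w i * ((s • y + t • z) i - x i) =
        s * ∑ i with x i ≠ 0, w i * (y i - x i) + t * ∑ i with x i ≠ 0, w i * (z i - x i) := by
      simp only [Finset.mul_sum, ← Finset.sum_add_distrib, PiLp.add_apply, PiLp.smul_apply,
        smul_eq_mul]
      refine Finset.sum_congr rfl fun i _ ↦ ?_
      linear_combination w i * x i * hst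
    rw [hcomb]
    exact add_nonpos (mul_nonpos_of_nonneg_of_nonpos hs hy_half)
      (mul_nonpos_of_nonneg_of_nonpos ht hz_half)

theorem exists_pos_add_smul_mem_orthantHalfspace {d : EuclideanSpace ℝ ι}
    (hd_supp : ∀ i, x i = 0 → d i = 0) (hd_half : ∑ i with x i ≠ 0, w i * d i ≤ 0) :
    ∃ t : ℝ, 0 < t ∧ x + t • d ∈ orthantHalfspace w x := by
  have hsign : ∀ᶠ t : ℝ in 𝓝 0, ∀ i, x i ≠ 0 → 0 ≤ Real.sign (x i) * (x i + t * d i) := by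
    refine eventually_all.2 fun i ↦ eventually_imp_distrib_left.2 fun hi ↦ ?_
    have hcont : Continuous fun t : ℝ ↦ Real.sign (x i) * (x i + t * d i) := by fun_prop
    refine (hcont.continuousAt.eventually_const_lt ?_).mono fun t ht ↦ ht.le
    simpa using Real.sign_mul_pos_of_ne_zero (x i) hi
  obtain ⟨t, ht_sign, ht⟩ :=
    ((hsign.filter_mono nhdsWithin_le_nhds).and (self_mem_nhdsWithin (s := Set.Ioi 0))).exists
  refine ⟨t, ht, fun i hi ↦ by simp [hi, hd_supp i hi], ht_sign, ?_⟩
  have hscale : ∑ i with x i ≠ 0, w i * ((x + t • d) i - x i) =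
      t * ∑ i with x i ≠ 0, w i * d i := by
    simp only [PiLp.add_apply, PiLp.smul_apply, smul_eq_mul, add_sub_cancel_left, Finset.mul_sum,
      mul_left_comm]
  rw [hscale]
  exact mul_nonpos_of_nonneg_of_nonpos (Set.mem_Ioi.1 ht).le hd_half

theorem real_inner_eq_sum_support {g d : EuclideanSpace ℝ ι} (hd : ∀ i, x i = 0 → d i = 0) :
    ⟪g, d⟫_ℝ = ∑ i with x i ≠ 0, g i * d i := by
  have hne (i : ι) (_ : i ∈ Finset.univ) (hi : g i * d i ≠ 0) : x i ≠ 0 :=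
    fun hxi ↦ hi (by rw [hd i hxi, mul_zero])
  rw [Finset.sum_filter_of_ne hne]
  simp [PiLp.inner_apply, mul_comm]

theorem forall_mem_orthantHalfspace_real_inner_nonneg_iff {g : EuclideanSpace ℝ ι} :
    (∀ y ∈ orthantHalfspace w x, 0 ≤ ⟪g, y - x⟫_ℝ) ↔
      ∃ ξ : ℝ, 0 ≤ ξ ∧ ∀ i, x i ≠ 0 → g i + ξ * w i = 0 := by
  have hmult := exists_nonneg_forall_mem_add_mul_eq_zero_iff
    (s := Finset.univ.filter fun i ↦ x i ≠ 0) (a := w) (g := g)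
  simp only [Finset.mem_filter_univ] at hmult
  rw [hmult]
  constructor
  · intro h d hd
    let dSupp : EuclideanSpace ℝ ι := WithLp.toLp 2 fun i ↦ if x i = 0 then 0 else d i
    have hd_supp (i : ι) (hi : x i = 0) : dSupp i = 0 := if_pos hi
    have sum_mul_dSupp (c : ι → ℝ) :
        ∑ i with x i ≠ 0, c i * dSupp i = ∑ i with x i ≠ 0, c i * d i :=
      Finset.sum_congr rfl fun i hi ↦ by rw [show dSupp i = d i from if_neg (by simpa using hi)]
    obtain ⟨t, ht, hmem⟩ :=
      exists_pos_add_smul_mem_orthantHalfspace hd_supp ((sum_mul_dSupp w).trans_le hd)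
    have hinner := h _ hmem
    rwa [add_sub_cancel_left, real_inner_smul_right, mul_nonneg_iff_of_pos_left ht,
      real_inner_eq_sum_support hd_supp, sum_mul_dSupp] at hinner
  · rintro h y ⟨hy_supp, -, hy_half⟩
    rw [real_inner_eq_sum_support (x := x) fun i hi ↦ by simp [hi, hy_supp i hi]]
    exact h (y - x) hy_half

end OrthantHalfspace

/-- First-order stationarity of `x` for minimizing `f` over the `ℓ_p` ball `∑ i, |x i| ^ p ≤ γ`:
a critical point in the interior, or a boundary point with a nonnegative multiplier `ξ`, the
multiplier equation being required only at the nonzero coordinates, where `|·| ^ p` is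
differentiable. -/
def IsStationaryOnLpBall {ι : Type*} [Fintype ι] (p γ : ℝ) (f : EuclideanSpace ℝ ι → ℝ)
    (x : EuclideanSpace ℝ ι) : Prop :=
  (gradient f x = 0 ∧ ∑ i, |x i| ^ p < γ) ∨
    ((∑ i, |x i| ^ p = γ) ∧ ∃ ξ : ℝ, 0 ≤ ξ ∧ ∀ i, x i ≠ 0 →
      gradient f x i + ξ * p * |x i| ^ (p - 1) * Real.sign (x i) = 0)

theorem stmt_10_general {ι : Type*} [Fintype ι] {p γ β : ℝ} (hβ : 0 < β)
    {f : EuclideanSpace ℝ ι → ℝ} {g x : EuclideanSpace ℝ ι} (hf : HasGradientAt f g x)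
    (hx : ∑ i, |x i| ^ p = γ) :
    IsStationaryOnLpBall p γ f x ↔
      IsMinOn (fun y ↦ 1 / (2 * β) * ‖y - (x - β • g)‖ ^ 2)
        (orthantHalfspace (fun i ↦ Real.sign (x i) * (p * |x i| ^ (p - 1))) x) x := by
  rw [isMinOn_sq_norm_sub_gradient_step_iff convex_orthantHalfspace self_mem_orthantHalfspace hβ,
    forall_mem_orthantHalfspace_real_inner_nonneg_iff, IsStationaryOnLpBall, hf.gradient]
  have hmul (ξ : ℝ) (i : ι) : ξ * p * |x i| ^ (p - 1) * Real.sign (x i) =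
      ξ * (Real.sign (x i) * (p * |x i| ^ (p - 1))) := by ring
  simp only [hx, lt_irrefl, and_false, false_or, true_and, hmul]

/-- for a boundary point `x` of the ℓ_p ball, `x` is first-order stationary for
minimizing `f` over the ℓ_p ball iff `x` minimizes `y ↦ (1/(2β))‖y - u‖²` (with
`u = x - β ∇f(x)`) over the weighted-ℓ₁ linearized set `B^x`. -/
theorem stmt_10 (n : ℕ) (p γ : ℝ) (hp0 : 0 < p) (hp1 : p < 1) (hγ : 0 < γ)
    (β : ℝ) (hβ : 0 < β)
    (f : EuclideanSpace ℝ (Fin n) → ℝ) (hf : Differentiable ℝ f)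
    (x : EuclideanSpace ℝ (Fin n)) (hx : ∑ i, |x i| ^ p = γ)
    (u : EuclideanSpace ℝ (Fin n)) (hu : u = x - β • gradient f x) :
    ((gradient f x = 0 ∧ ∑ i, |x i| ^ p < γ) ∨
      ((∑ i, |x i| ^ p = γ) ∧ ∃ ξ : ℝ, 0 ≤ ξ ∧ ∀ i, x i ≠ 0 →
        gradient f x i + ξ * p * |x i| ^ (p - 1) * Real.sign (x i) = 0))
    ↔
    (∀ y : EuclideanSpace ℝ (Fin n),
      (∀ i, x i = 0 → y i = 0) →
      (∀ i, x i ≠ 0 → 0 ≤ Real.sign (x i) * y i) →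
      (∑ i ∈ Finset.univ.filter (fun i => x i ≠ 0),
        Real.sign (x i) * (p * |x i| ^ (p - 1)) * (y i - x i)) ≤ 0 →
      1 / (2 * β) * ‖x - u‖ ^ 2 ≤ 1 / (2 * β) * ‖y - u‖ ^ 2) := by
  subst hu
  simpa only [IsStationaryOnLpBall, isMinOn_iff, orthantHalfspace, Set.mem_ofPred_eq, and_imp]
    using stmt_10_general hβ (hf x).hasGradientAt hx
end

section
/- Let C ⊆ ℝ^n be a nonempty closed convex set, let f : ℝ^n → ℝ be differentiable with L-Lipschitz gradient (L > 0), let β ∈ (0, 1/L], let x ∈ C, set u = x − β·∇f(x) and P(y) = (1/(2β))·‖y − u‖₂², and let x⁺ be the minimizer of P over C. Then f(x⁺) ≤ f(x) − (P(x) − P(x⁺)); in particular f(x⁺) ≤ f(x). -/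
/-!
A function whose gradient is `L`-Lipschitz is majorized by its quadratic model
`f x + ⟪∇ f x, y - x⟫ + L / 2 * ‖y - x‖ ^ 2`. Completing the square shows that `P y - P x` is the
same linear term plus `1 / (2 * β) * ‖y - x‖ ^ 2`, and `L / 2 ≤ 1 / (2 * β)`, so
`f y - f x ≤ P y - P x`.
-/

open AffineMap (lineMap)
open scoped Gradient RealInnerProductSpace

section Taylor

variable {E F : Type*} [NormedAddCommGroup E] [NormedSpace ℝ E]
  [NormedAddCommGroup F] [NormedSpace ℝ F]

theorem norm_image_sub_le_of_norm_deriv_right_le_mul_sub_segment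
    {g g' : ℝ → F} {C a b : ℝ} (hg : ContinuousOn g (Set.Icc a b))
    (hg' : ∀ t ∈ Set.Ico a b, HasDerivWithinAt g (g' t) (Set.Ici t) t)
    (bound : ∀ t ∈ Set.Ico a b, ‖g' t‖ ≤ C * (t - a)) :
    ∀ t ∈ Set.Icc a b, ‖g t - g a‖ ≤ C / 2 * (t - a) ^ 2 := by
  have hquad (t : ℝ) : HasDerivAt (fun t : ℝ => C / 2 * (t - a) ^ 2) (C * (t - a)) t :=
    ((((hasDerivAt_id' t).sub_const a).fun_pow 2).const_mul (C / 2)).congr_deriv (by ring)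
  exact image_norm_le_of_norm_deriv_right_le_deriv_boundary (hg.sub continuousOn_const)
    (fun t ht => (hg' t ht).sub_const (g a)) (by simp) hquad bound

theorem norm_image_sub_sub_le_of_norm_hasFDerivWithin_sub_le_segment
    {f : E → F} {f' : E → E →L[ℝ] F} {L : ℝ} {x y : E}
    (hf : ∀ z ∈ segment ℝ x y, HasFDerivWithinAt f (f' z) (segment ℝ x y) z)
    (hlip : ∀ z ∈ segment ℝ x y, ‖f' z - f' x‖ ≤ L * ‖z - x‖) :
    ‖f y - f x - f' x (y - x)‖ ≤ L / 2 * ‖y - x‖ ^ 2 := by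
  have hmaps : Set.MapsTo (lineMap x y : ℝ → E) (Set.Icc 0 1) (segment ℝ x y) :=
    fun _ ht => lineMap_mem_segment ℝ x y ht
  let g (t : ℝ) : F := f (lineMap x y t) - t • f' x (y - x)
  have hderiv (t : ℝ) (ht : t ∈ Set.Icc (0 : ℝ) 1) :
      HasDerivWithinAt g ((f' (lineMap x y t) - f' x) (y - x)) (Set.Icc 0 1) t := by
    have hcomp := (hf _ (hmaps ht)).comp_hasDerivWithinAt t
      (AffineMap.hasDerivWithinAt_lineMap (a := x) (b := y)) hmaps
    have hlin := (hasDerivWithinAt_id t (Set.Icc (0 : ℝ) 1)).smul_const (f' x (y - x))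
    exact (hcomp.sub hlin).congr_deriv (by simp)
  have hderiv_le (t : ℝ) (ht : t ∈ Set.Ico (0 : ℝ) 1) :
      ‖(f' (lineMap x y t) - f' x) (y - x)‖ ≤ L * ‖y - x‖ ^ 2 * (t - 0) :=
    calc ‖(f' (lineMap x y t) - f' x) (y - x)‖
        ≤ ‖f' (lineMap x y t) - f' x‖ * ‖y - x‖ := ContinuousLinearMap.le_opNorm _ _
      _ ≤ L * ‖lineMap x y t - x‖ * ‖y - x‖ := by
          gcongr
          exact hlip _ (hmaps (Set.Ico_subset_Icc_self ht))
      _ = L * ‖y - x‖ ^ 2 * (t - 0) := by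
          rw [← dist_eq_norm (lineMap x y t), dist_lineMap_left, Real.norm_of_nonneg ht.1,
            dist_eq_norm']
          ring
  have hg_sub : g 1 - g 0 = f y - f x - f' x (y - x) := by
    simp only [g, AffineMap.lineMap_apply_one, AffineMap.lineMap_apply_zero, one_smul, zero_smul,
      sub_zero]
    abel
  calc ‖f y - f x - f' x (y - x)‖ = ‖g 1 - g 0‖ := by rw [hg_sub]
    _ ≤ L * ‖y - x‖ ^ 2 / 2 * (1 - 0) ^ 2 :=
        norm_image_sub_le_of_norm_deriv_right_le_mul_sub_segment
          (fun t ht => (hderiv t ht).continuousWithinAt)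
          (fun t ht => (hderiv t (Set.Ico_subset_Icc_self ht)).mono_of_mem_nhdsWithin
            (Icc_mem_nhdsGE_of_mem ht))
          hderiv_le 1 (Set.right_mem_Icc.2 zero_le_one)
    _ = L / 2 * ‖y - x‖ ^ 2 := by ring

end Taylor

section GradientStep

variable {E : Type*} [NormedAddCommGroup E] [InnerProductSpace ℝ E]

theorem le_add_inner_gradient_add_of_norm_gradient_sub_le_segment [CompleteSpace E]
    {f : E → ℝ} {L : ℝ} {x y : E} (hf : ∀ z ∈ segment ℝ x y, DifferentiableAt ℝ f z)
    (hlip : ∀ z ∈ segment ℝ x y, ‖∇ f z - ∇ f x‖ ≤ L * ‖z - x‖) :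
    f y ≤ f x + ⟪∇ f x, y - x⟫ + L / 2 * ‖y - x‖ ^ 2 := by
  have htaylor : ‖f y - f x - ⟪∇ f x, y - x⟫‖ ≤ L / 2 * ‖y - x‖ ^ 2 := by
    refine norm_image_sub_sub_le_of_norm_hasFDerivWithin_sub_le_segment
      (f' := fun z => InnerProductSpace.toDual ℝ E (∇ f z))
      (fun z hz => (hf z hz).hasGradientAt.hasFDerivAt.hasFDerivWithinAt) fun z hz => ?_
    rw [← map_sub, LinearIsometryEquiv.norm_map]
    exact hlip z hz
  linarith [Real.le_norm_self (f y - f x - ⟪∇ f x, y - x⟫)]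

theorem norm_sub_sq_sub_norm_sub_sq_real (x y u : E) :
    ‖y - u‖ ^ 2 - ‖x - u‖ ^ 2 = 2 * ⟪x - u, y - x⟫ + ‖y - x‖ ^ 2 := by
  rw [← sub_add_sub_cancel y x u, norm_add_sq_real, real_inner_comm]
  ring

theorem stmt_14_general [CompleteSpace E] {f : E → ℝ} {L β : ℝ} {x xp u : E} {P : E → ℝ}
    (hf : ∀ z ∈ segment ℝ x xp, DifferentiableAt ℝ f z)
    (hlip : ∀ z ∈ segment ℝ x xp, ‖∇ f z - ∇ f x‖ ≤ L * ‖z - x‖)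
    (hβ : 0 < β) (hβL : β * L ≤ 1) (hu : u = x - β • ∇ f x)
    (hP : ∀ y, P y = 1 / (2 * β) * ‖y - u‖ ^ 2) :
    f xp ≤ f x - (P x - P xp) ∧ (P xp ≤ P x → f xp ≤ f x) := by
  have hcurv : L / 2 ≤ 1 / (2 * β) := by
    rw [div_le_div_iff₀ two_pos (by positivity)]
    linarith
  have hmodel : P xp - P x = ⟪∇ f x, xp - x⟫ + 1 / (2 * β) * ‖xp - x‖ ^ 2 := by
    rw [hP, hP, ← mul_sub, norm_sub_sq_sub_norm_sub_sq_real, hu, sub_sub_cancel,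
      real_inner_smul_left]
    field
  have hdecrease : f xp - f x ≤ P xp - P x :=
    calc f xp - f x
        ≤ ⟪∇ f x, xp - x⟫ + L / 2 * ‖xp - x‖ ^ 2 := by
          linarith [le_add_inner_gradient_add_of_norm_gradient_sub_le_segment hf hlip]
      _ ≤ ⟪∇ f x, xp - x⟫ + 1 / (2 * β) * ‖xp - x‖ ^ 2 := by gcongr
      _ = P xp - P x := hmodel.symm
  exact ⟨by linarith, fun hPxp => by linarith⟩

end GradientStep

/-- with stepsize `β ∈ (0, 1/L]`, the gradient projection step onto a nonempty
closed convex set `C` satisfies `f(x⁺) ≤ f(x) - (P(x) - P(x⁺))`, and in particular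
`f(x⁺) ≤ f(x)`. -/
theorem stmt_14 (n : ℕ) (C : Set (EuclideanSpace ℝ (Fin n)))
    (hCne : C.Nonempty) (hCcl : IsClosed C) (hCcv : Convex ℝ C)
    (f : EuclideanSpace ℝ (Fin n) → ℝ) (hf : Differentiable ℝ f)
    (L : ℝ) (hL : 0 < L)
    (hlip : ∀ y z : EuclideanSpace ℝ (Fin n),
      ‖gradient f y - gradient f z‖ ≤ L * ‖y - z‖)
    (β : ℝ) (hβ0 : 0 < β) (hβL : β ≤ 1 / L)
    (x : EuclideanSpace ℝ (Fin n)) (hxC : x ∈ C)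
    (u : EuclideanSpace ℝ (Fin n)) (hu : u = x - β • gradient f x)
    (P : EuclideanSpace ℝ (Fin n) → ℝ) (hP : ∀ y, P y = 1 / (2 * β) * ‖y - u‖ ^ 2)
    (xp : EuclideanSpace ℝ (Fin n)) (hxpC : xp ∈ C)
    (hxpmin : ∀ y ∈ C, P xp ≤ P y) :
    f xp ≤ f x - (P x - P xp) ∧ f xp ≤ f x := by
  obtain ⟨hdecrease, hmono⟩ := stmt_14_general (fun z _ => hf z) (fun z _ => hlip z x) hβ0
    ((le_div_iff₀ hL).1 hβL) hu hP
  exact ⟨hdecrease, hmono (hxpmin x hxC)⟩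
end
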